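/- Let τ ∈ (0,1) and let f : ℝ/ℤ → [0,1] be a Borel function with τ ≤ f ≤ 1−τ almost everywhere. Then for all integers N, ℓ ≥ 1 and all ε, ε' ∈ {0,1}^N, the matrices T_N(f) + D_N(ε−1) and T_N(f) + D_N(ε'−1) are invertible, and the matrix H^f_{N,ℓ}(ε,ε') := [T_N(f)+D_N(ε'−1)]^{−1} · Λ_{N,ℓ}(f)* · [T_N(f)+D_N(ε−1)]^{−1} · Λ_{N,ℓ}(f) satisfies ‖H^f_{N,ℓ}(ε,ε')‖₁ ≤ (1/τ²)·‖Λ_{N,ℓ}(f)‖_HS². -/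

import Mathlib

open MeasureTheory Matrix
open scoped ComplexOrder

/-- The `n`-th Fourier coefficient of a function on the circle `ℝ/ℤ`. -/
noncomputable def fhat (f : AddCircle (1:ℝ) → ℝ) (n : ℤ) : ℂ :=
  fourierCoeff (fun t => (f t : ℂ)) n

/-- A boolean seen as the complex number `0` or `1`. -/
def bc (b : Bool) : ℂ := if b then 1 else 0

/-- The `N×N` Toeplitz matrix `T_N(f) = (f̂(i-j))_{1 ≤ i,j ≤ N}`. -/
noncomputable def Tmat (f : AddCircle (1:ℝ) → ℝ) (N : ℕ) : Matrix (Fin N) (Fin N) ℂ :=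
  Matrix.of fun i j => fhat f (((i : ℕ) : ℤ) - ((j : ℕ) : ℤ))

/-- The `N×N` matrix `Λ_{N,ℓ}(f) = (f̂(i-(j+N+ℓ)))_{1 ≤ i,j ≤ N}`. -/
noncomputable def Lmat (f : AddCircle (1:ℝ) → ℝ) (N ℓ : ℕ) : Matrix (Fin N) (Fin N) ℂ :=
  Matrix.of fun i j => fhat f (((i : ℕ) : ℤ) - (((j : ℕ) : ℤ) + (N : ℤ) + (ℓ : ℤ)))

open scoped MatrixOrder in
/-- The trace norm `‖M‖₁` of a complex square matrix: the trace of the positive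
semidefinite square root of `Mᴴ M`. -/
noncomputable def traceNorm {N : ℕ} (M : Matrix (Fin N) (Fin N) ℂ) : ℝ :=
  ((CFC.sqrt (Mᴴ * M)).trace).re

/-- The squared Hilbert–Schmidt (Frobenius) norm `‖M‖_HS² = Σ_{i,j} |M_{ij}|²`. -/
noncomputable def frobSq {N : ℕ} (M : Matrix (Fin N) (Fin N) ℂ) : ℝ :=
  ∑ i, ∑ j, ‖M i j‖ ^ 2

lemma frobSq_eq {N : ℕ} (M : Matrix (Fin N) (Fin N) ℂ) : frobSq M = ((Mᴴ * M).trace).re := by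
  simp only [frobSq, Matrix.trace, Matrix.diag, Matrix.mul_apply, Matrix.conjTranspose_apply,
    Complex.re_sum]
  rw [Finset.sum_comm]
  refine Finset.sum_congr rfl fun i _ => Finset.sum_congr rfl fun j _ => ?_
  rw [Complex.sq_norm, Complex.normSq_apply]
  simp

lemma frobSq_conjTranspose {N : ℕ} (M : Matrix (Fin N) (Fin N) ℂ) : frobSq Mᴴ = frobSq M := by
  simp only [frobSq, Matrix.conjTranspose_apply, norm_star]
  rw [Finset.sum_comm]

lemma trace_re_nonneg {N : ℕ} {M : Matrix (Fin N) (Fin N) ℂ} (h : M.PosSemidef) :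
    0 ≤ M.trace.re := (Complex.le_def.1 h.trace_nonneg).1

/-- If `AᴴA - c` is positive semidefinite then `c ‖X‖² ≤ ‖AX‖²`. -/
lemma frobSq_lower {N : ℕ} {A : Matrix (Fin N) (Fin N) ℂ} {c : ℝ}
    (h : (Aᴴ * A - (c : ℂ) • 1).PosSemidef) (X : Matrix (Fin N) (Fin N) ℂ) :
    c * frobSq X ≤ frobSq (A * X) := by
  have h2 := trace_re_nonneg (h.conjTranspose_mul_mul_same X)
  have e : Xᴴ * (Aᴴ * A - (c : ℂ) • 1) * X = (A * X)ᴴ * (A * X) - (c : ℂ) • (Xᴴ * X) := by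
    rw [Matrix.conjTranspose_mul]
    simp [Matrix.mul_sub, Matrix.sub_mul, Matrix.mul_assoc]
  rw [e, Matrix.trace_sub, Matrix.trace_smul] at h2
  rw [frobSq_eq, frobSq_eq]
  simp at h2
  simpa using h2

lemma frobSq_upper {N : ℕ} {V : Matrix (Fin N) (Fin N) ℂ}
    (h : (1 - Vᴴ * V).PosSemidef) (X : Matrix (Fin N) (Fin N) ℂ) :
    frobSq (V * X) ≤ frobSq X := by
  have h2 := trace_re_nonneg (h.conjTranspose_mul_mul_same X)
  have e : Xᴴ * (1 - Vᴴ * V) * X = Xᴴ * X - (V * X)ᴴ * (V * X) := by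
    rw [Matrix.conjTranspose_mul]
    simp [Matrix.mul_sub, Matrix.sub_mul, Matrix.mul_assoc]
  rw [e, Matrix.trace_sub] at h2
  rw [frobSq_eq, frobSq_eq]
  simp at h2
  simpa using h2

lemma trace_mul_le {N : ℕ} (A B : Matrix (Fin N) (Fin N) ℂ) :
    ((A * B).trace).re ≤ (frobSq A + frobSq B) / 2 := by
  rw [← frobSq_conjTranspose B]
  simp only [frobSq, Matrix.trace, Matrix.diag, Matrix.mul_apply, Complex.re_sum,
    ← Finset.sum_add_distrib, Finset.sum_div]
  refine Finset.sum_le_sum fun i _ => Finset.sum_le_sum fun j _ => ?_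
  have h1 : (A i j * B j i).re ≤ ‖A i j‖ * ‖B j i‖ := by
    rw [← norm_mul]; exact Complex.re_le_norm _
  rw [Matrix.conjTranspose_apply, norm_star]
  nlinarith [sq_nonneg (‖A i j‖ - ‖B j i‖)]

open scoped MatrixOrder in
lemma traceNorm_mul_le {N : ℕ} (X Y : Matrix (Fin N) (Fin N) ℂ) :
    traceNorm (X * Y) ≤ (frobSq X + frobSq Y) / 2 := by
  set M := X * Y with hM
  have hSS : CFC.sqrt (Mᴴ * M) * CFC.sqrt (Mᴴ * M) = Mᴴ * M :=
    CFC.sqrt_mul_sqrt_self _ (Matrix.posSemidef_conjTranspose_mul_self M).nonneg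
  have hS : (CFC.sqrt (Mᴴ * M)).PosSemidef :=
    Matrix.nonneg_iff_posSemidef.1 (CFC.sqrt_nonneg _)
  unfold traceNorm
  generalize CFC.sqrt (Mᴴ * M) = S at hSS hS
  obtain ⟨U, s, hU1, hU2, hSU⟩ : ∃ (U : Matrix (Fin N) (Fin N) ℂ) (s : Fin N → ℝ),
      Uᴴ * U = 1 ∧ U * Uᴴ = 1 ∧ S = U * diagonal (fun i => (s i : ℂ)) * Uᴴ := by
    refine ⟨hS.1.eigenvectorUnitary, hS.1.eigenvalues, ?_, ?_, ?_⟩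
    · exact Unitary.coe_star_mul_self hS.1.eigenvectorUnitary
    · exact Unitary.coe_mul_star_self hS.1.eigenvectorUnitary
    · have := hS.1.spectral_theorem
      rw [Unitary.conjStarAlgAut_apply] at this
      exact this
  set D : Matrix (Fin N) (Fin N) ℂ := diagonal (fun i => (s i : ℂ)) with hD
  set R : Matrix (Fin N) (Fin N) ℂ := diagonal (fun i => ((s i : ℂ))⁻¹) with hR
  have hRH : Rᴴ = R := by
    rw [hR, diagonal_conjTranspose]; congr 1; ext i; simp
  have hRDD : R * (D * D) = D := by
    rw [hR, hD, diagonal_mul_diagonal, diagonal_mul_diagonal]; congr 1; ext i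
    by_cases h : (s i : ℂ) = 0
    · simp [h]
    · field_simp
  have hDRR : D * (R * R) = R := by
    rw [hR, hD, diagonal_mul_diagonal, diagonal_mul_diagonal]; congr 1; ext i
    by_cases h : (s i : ℂ) = 0
    · simp [h]
    · field_simp
  have hMM : Uᴴ * (Mᴴ * M) * U = D * D := by
    rw [← hSS, hSU]
    calc Uᴴ * (U * D * Uᴴ * (U * D * Uᴴ)) * U
        = (Uᴴ * U) * D * (Uᴴ * U) * D * (Uᴴ * U) := by simp only [Matrix.mul_assoc]
      _ = D * D := by simp [hU1]
  set V := R * Uᴴ * Mᴴ with hV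
  have hVH : Vᴴ = M * U * R := by
    simp [hV, hRH, Matrix.mul_assoc]
  have hVV : V * Vᴴ = D * R := by
    calc V * Vᴴ = R * (Uᴴ * (Mᴴ * M) * U) * R := by
          rw [hVH, hV]; simp only [Matrix.mul_assoc]
      _ = D * R := by rw [hMM, hRDD]
  have hproj : (Vᴴ * V) * (Vᴴ * V) = Vᴴ * V := by
    calc (Vᴴ * V) * (Vᴴ * V) = Vᴴ * (V * Vᴴ) * V := by simp only [Matrix.mul_assoc]
      _ = M * U * (R * D * R) * (R * Uᴴ * Mᴴ) := by
          rw [hVV, hVH, hV]; simp only [Matrix.mul_assoc]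
      _ = M * U * R * (D * (R * R)) * Uᴴ * Mᴴ := by simp only [Matrix.mul_assoc]
      _ = Vᴴ * V := by rw [hDRR, hVH, hV]; simp only [Matrix.mul_assoc]
  have hpsd : (1 - Vᴴ * V).PosSemidef := by
    have h := Matrix.posSemidef_conjTranspose_mul_self (1 - Vᴴ * V)
    have e : (1 - Vᴴ * V)ᴴ * (1 - Vᴴ * V) = 1 - Vᴴ * V := by
      rw [Matrix.conjTranspose_sub, Matrix.conjTranspose_mul, Matrix.conjTranspose_conjTranspose,
        Matrix.conjTranspose_one, Matrix.sub_mul, Matrix.mul_sub, Matrix.mul_sub, hproj]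
      simp
    rwa [e] at h
  have htr : S.trace = ((V * X) * (Y * U)).trace := by
    have e1 : (V * X) * (Y * U) = D := by
      calc (V * X) * (Y * U) = R * (Uᴴ * (Mᴴ * M) * U) := by
            rw [hV, hM]; simp only [Matrix.mul_assoc]
        _ = D := by rw [hMM, hRDD]
    rw [e1, hSU, Matrix.trace_mul_comm, ← Matrix.mul_assoc, hU1, Matrix.one_mul]
  rw [htr]
  refine (trace_mul_le _ _).trans ?_
  have h1 := frobSq_upper hpsd X
  have h2 : frobSq (Y * U) ≤ frobSq Y := by
    rw [← frobSq_conjTranspose, ← frobSq_conjTranspose Y, Matrix.conjTranspose_mul]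
    apply frobSq_upper
    simp [hU2, Matrix.PosSemidef.zero]
  linarith

open AddCircle in
lemma integrable_term (g : AddCircle (1:ℝ) → ℝ) (hg : Measurable g) (C : ℝ)
    (hC : ∀ t, |g t| ≤ C) (n : ℤ) :
    Integrable (fun t => fourier n t * (g t : ℂ)) (haarAddCircle (T := 1)) := by
  refine Integrable.of_bound ?_ C ?_
  · exact ((fourier n).continuous.measurable.mul
      (Complex.measurable_ofReal.comp hg)).aestronglyMeasurable
  · refine Filter.Eventually.of_forall fun t => ?_
    rw [norm_mul, fourier_apply, Circle.norm_coe, one_mul, Complex.norm_real]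
    exact hC t

open AddCircle in
lemma Tmat_posSemidef (g : AddCircle (1:ℝ) → ℝ) (hg : Measurable g) (C : ℝ)
    (hC : ∀ t, |g t| ≤ C) (h0 : ∀ᵐ t : AddCircle (1:ℝ), 0 ≤ g t) (N : ℕ) :
    (Tmat g N).PosSemidef := by
  have h0' : ∀ᵐ t ∂(haarAddCircle (T := 1)), 0 ≤ g t := by
    have := h0
    rw [volume_eq_smul_haarAddCircle] at this
    simpa using this
  refine Matrix.PosSemidef.of_dotProduct_mulVec_nonneg ?_ fun x => ?_
  · ext i j
    simp only [Tmat, Matrix.conjTranspose_apply, Matrix.of_apply, fhat, fourierCoeff]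
    rw [← starRingEnd_apply, ← integral_conj]
    congr 1; ext t
    simp only [smul_eq_mul, map_mul, Complex.conj_ofReal, ← fourier_neg]
    congr 2
    ring_nf
  · have key : star x ⬝ᵥ (Tmat g N *ᵥ x) =
        ((∫ t, g t * ‖∑ j : Fin N, x j * fourier (j : ℤ) t‖ ^ 2 ∂(haarAddCircle (T := 1)) : ℝ) : ℂ) := by
      rw [← integral_complex_ofReal]
      have hpt : ∀ t : AddCircle (1:ℝ),
          ((g t * ‖∑ j : Fin N, x j * fourier (j : ℤ) t‖ ^ 2 : ℝ) : ℂ) =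
          ∑ i : Fin N, ∑ j : Fin N, (star (x i) * x j) *
            (fourier (-(((i : ℕ) : ℤ) - ((j : ℕ) : ℤ))) t * (g t : ℂ)) := by
        intro t
        push_cast
        rw [← Complex.conj_mul', map_sum, Finset.sum_mul_sum, Finset.mul_sum]
        refine Finset.sum_congr rfl fun i _ => ?_
        rw [Finset.mul_sum]
        refine Finset.sum_congr rfl fun j _ => ?_
        rw [neg_sub, sub_eq_add_neg, fourier_add, fourier_neg, map_mul, ← starRingEnd_apply]
        ring
      simp_rw [hpt]
      rw [integral_finsetSum]
      swap
      · intro i _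
        exact integrable_finsetSum _ fun j _ => (integrable_term g hg C hC _).const_mul _
      simp only [dotProduct, mulVec, Finset.mul_sum]
      refine Finset.sum_congr rfl fun i _ => ?_
      rw [integral_finsetSum]
      swap
      · exact fun j _ => (integrable_term g hg C hC _).const_mul _
      refine Finset.sum_congr rfl fun j _ => ?_
      rw [integral_const_mul]
      simp only [Tmat, Matrix.of_apply, fhat, fourierCoeff, smul_eq_mul, Pi.star_apply]
      ring
    rw [key]
    rw [Complex.zero_le_real]
    refine integral_nonneg_of_ae ?_
    filter_upwards [h0'] with t ht
    simp only [Pi.zero_apply]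
    positivity

open AddCircle in
lemma fhat_affine (f : AddCircle (1:ℝ) → ℝ) (hf : Measurable f) (hC : ∀ t, |f t| ≤ 1)
    (a b : ℝ) (n : ℤ) :
    fhat (fun t => a * f t + b) n = a * fhat f n + if n = 0 then (b : ℂ) else 0 := by
  have h1 : fourierCoeff (fun _ : AddCircle (1:ℝ) => (1:ℂ)) n = if n = 0 then 1 else 0 := by
    have := congrFun (fourierCoeff_fourier (T := 1) 0) n
    have e : (fun _ : AddCircle (1:ℝ) => (1:ℂ)) = ⇑(fourier (T := 1) 0) := by
      ext t; exact fourier_zero.symm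
    rw [e, this, Pi.single_apply]
  unfold fhat fourierCoeff at *
  simp only [smul_eq_mul, mul_one] at *
  have hi := integrable_term f hf 1 hC (-n)
  have hi1 : Integrable (fun t => fourier (-n) t) (haarAddCircle (T := 1)) := by
    simpa using integrable_term (fun _ => 1) measurable_const 1 (by simp) (-n)
  have : ∀ t : AddCircle (1:ℝ), fourier (-n) t * ((a * f t + b : ℝ) : ℂ) =
      a * (fourier (-n) t * (f t : ℂ)) + b * fourier (-n) t := by
    intro t; push_cast; ring
  simp_rw [this]
  rw [integral_add (hi.const_mul _) (hi1.const_mul _), integral_const_mul, integral_const_mul, h1]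
  simp

lemma Tmat_affine (f : AddCircle (1:ℝ) → ℝ) (hf : Measurable f) (hC : ∀ t, |f t| ≤ 1)
    (a b : ℝ) (N : ℕ) :
    Tmat (fun t => a * f t + b) N = (a : ℂ) • Tmat f N + (b : ℂ) • 1 := by
  ext i j
  simp only [Tmat, Matrix.of_apply, Matrix.add_apply, Matrix.smul_apply, smul_eq_mul,
    fhat_affine f hf hC, Matrix.one_apply]
  congr 1
  simp only [sub_eq_zero, Nat.cast_inj, Fin.val_inj]
  split_ifs <;> simp

/-- Key algebraic estimate: `AᴴA ≥ τ²` for `A = T + D(ε-1)`. -/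
lemma key_lower {N : ℕ} (T : Matrix (Fin N) (Fin N) ℂ) (τ : ℝ) (hτ : 0 < τ)
    (h1 : (T - (τ : ℂ) • 1).PosSemidef) (h2 : (((1 - τ : ℝ) : ℂ) • 1 - T).PosSemidef)
    (hT : T.IsHermitian) (ε : Fin N → Bool) :
    ((T + diagonal (fun i => bc (ε i) - 1))ᴴ * (T + diagonal (fun i => bc (ε i) - 1))
      - ((τ ^ 2 : ℝ) : ℂ) • 1).PosSemidef := by
  set P : Matrix (Fin N) (Fin N) ℂ := diagonal (fun i => bc (ε i)) with hP
  have hD : diagonal (fun i => bc (ε i) - 1) = P - 1 := by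
    rw [hP, ← diagonal_one, diagonal_sub]
  have hPH : Pᴴ = P := by
    rw [hP, diagonal_conjTranspose]; congr 1; ext i
    cases h : ε i <;> simp [bc, h]
  have hPP : P * P = P := by
    rw [hP, diagonal_mul_diagonal]; congr 1; ext i
    cases h : ε i <;> simp [bc]
  rw [hD]
  have hAH : (T + (P - 1))ᴴ = T + (P - 1) := by
    simp [hT.eq, hPH]
  have hB : (T + (P - 1) - (τ : ℂ) • (2 • P - 1))ᴴ = T + (P - 1) - (τ : ℂ) • (2 • P - 1) := by
    simp [hT.eq, hPH, two_mul, mul_two]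
  have q1 := Matrix.posSemidef_conjTranspose_mul_self (T + (P - 1) - (τ : ℂ) • (2 • P - 1))
  have q2 := h1.conjTranspose_mul_mul_same P
  have q3 := h2.conjTranspose_mul_mul_same (1 - P)
  rw [hB] at q1
  rw [hPH] at q2
  rw [Matrix.conjTranspose_sub, hPH, Matrix.conjTranspose_one] at q3
  have hτ' : (0 : ℂ) ≤ ((2 * τ : ℝ) : ℂ) := by
    rw [Complex.zero_le_real]; positivity
  have q := q1.add ((q2.add q3).smul hτ')
  rw [hAH]
  convert q using 1
  have hPP' : ∀ Z, P * (P * Z) = P * Z := fun Z => by rw [← Matrix.mul_assoc, hPP]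
  simp only [two_smul, Matrix.mul_add, Matrix.add_mul, Matrix.mul_sub, Matrix.sub_mul,
    Matrix.smul_mul, Matrix.mul_smul, Matrix.mul_one, Matrix.one_mul, Matrix.mul_assoc, hPP, hPP',
    smul_add, smul_sub]
  push_cast
  module

lemma isUnit_of_lower {N : ℕ} {A : Matrix (Fin N) (Fin N) ℂ} {c : ℝ} (hc : 0 < c)
    (h : (Aᴴ * A - (c : ℂ) • 1).PosSemidef) : IsUnit A.det := by
  have hpd : (Aᴴ * A).PosDef := by
    have h1 : ((c : ℂ) • (1 : Matrix (Fin N) (Fin N) ℂ)).PosDef :=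
      Matrix.PosDef.one.smul (by exact_mod_cast hc)
    have := h1.posSemidef_add h
    simpa using this
  have := hpd.det_pos.ne'
  rw [Matrix.det_mul] at this
  exact isUnit_iff_ne_zero.2 (right_ne_zero_of_mul this)

/-- If `τ ≤ f ≤ 1 - τ` a.e. with `τ ∈ (0,1)`, then `T_N(f) + D_N(ε-1)` and
`T_N(f) + D_N(ε'-1)` are invertible and
`‖H^f_{N,ℓ}(ε,ε')‖₁ ≤ (1/τ²)·‖Λ_{N,ℓ}(f)‖_HS²`. -/
theorem traceNorm_H_le
    (τ : ℝ) (hτ0 : 0 < τ) (hτ1 : τ < 1)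
    (f : AddCircle (1:ℝ) → ℝ) (hmeas : Measurable f)
    (h0 : ∀ t, 0 ≤ f t) (h1 : ∀ t, f t ≤ 1)
    (hbd : ∀ᵐ t : AddCircle (1:ℝ), τ ≤ f t ∧ f t ≤ 1 - τ)
    (N ℓ : ℕ) (hN : 1 ≤ N) (hℓ : 1 ≤ ℓ) (ε ε' : Fin N → Bool) :
    IsUnit (Tmat f N + Matrix.diagonal (fun i => bc (ε i) - 1)).det ∧
      IsUnit (Tmat f N + Matrix.diagonal (fun i => bc (ε' i) - 1)).det ∧
      traceNorm
          ((Tmat f N + Matrix.diagonal (fun i => bc (ε' i) - 1))⁻¹ * (Lmat f N ℓ)ᴴ *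
            (Tmat f N + Matrix.diagonal (fun i => bc (ε i) - 1))⁻¹ * Lmat f N ℓ) ≤
        (1 / τ ^ 2) * frobSq (Lmat f N ℓ) := by
  have hC : ∀ t, |f t| ≤ 1 := fun t => abs_le.2 ⟨by linarith [h0 t], h1 t⟩
  have p1 : (Tmat f N - (τ : ℂ) • 1).PosSemidef := by
    have := Tmat_posSemidef (fun t => 1 * f t + (-τ)) (by fun_prop) 2
      (fun t => abs_le.2 ⟨by linarith [h0 t], by linarith [h1 t]⟩)
      (by filter_upwards [hbd] with t ht; linarith [ht.1]) N
    rw [Tmat_affine f hmeas hC] at this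
    convert this using 1
    push_cast
    module
  have p2 : (((1 - τ : ℝ) : ℂ) • 1 - Tmat f N).PosSemidef := by
    have := Tmat_posSemidef (fun t => (-1) * f t + (1 - τ)) (by fun_prop) 2
      (fun t => abs_le.2 ⟨by linarith [h1 t], by linarith [h0 t]⟩)
      (by filter_upwards [hbd] with t ht; linarith [ht.2]) N
    rw [Tmat_affine f hmeas hC] at this
    convert this using 1
    push_cast
    module
  have hT : (Tmat f N).IsHermitian :=
    (Tmat_posSemidef f hmeas 1 hC (Filter.Eventually.of_forall h0) N).1
  have hτ2 : 0 < τ ^ 2 := by positivity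
  have k := key_lower (Tmat f N) τ hτ0 p1 p2 hT ε
  have k' := key_lower (Tmat f N) τ hτ0 p1 p2 hT ε'
  have u := isUnit_of_lower hτ2 k
  have u' := isUnit_of_lower hτ2 k'
  refine ⟨u, u', ?_⟩
  generalize Tmat f N + Matrix.diagonal (fun i => bc (ε i) - 1) = A at *
  generalize Tmat f N + Matrix.diagonal (fun i => bc (ε' i) - 1) = A' at *
  generalize Lmat f N ℓ = L
  rw [Matrix.mul_assoc (A'⁻¹ * Lᴴ)]
  refine (traceNorm_mul_le _ _).trans ?_
  have e1 := frobSq_lower k (A⁻¹ * L)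
  have e2 := frobSq_lower k' (A'⁻¹ * Lᴴ)
  rw [Matrix.mul_nonsing_inv_cancel_left _ _ u] at e1
  rw [Matrix.mul_nonsing_inv_cancel_left _ _ u', frobSq_conjTranspose] at e2
  rw [one_div, inv_mul_eq_div, le_div_iff₀ hτ2]
  linarith
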